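/- arXiv:2601.12888 — 5 statements merged into one kernel-verified Lean document; each statement's English description precedes it below -/
import Mathlib

section
/- Let 0 < k < 1 and let α, β, γ be positive real numbers. Define Jacobi parameters a_n := k·√((n+1)(n+α)(n+β)(n+γ)) and b_n := k²(n+α)(n+β) + n(n+γ−1) for n ≥ 0, and define G : ℕ × ℕ → ℝ by G_{m,n} := (−1)^{m+n+1} k^{m+n−2} √((α)_m (α)_n (β)_m (β)_n / (m! n! (γ)_m (γ)_n)) · Σ_{j=n}^{m−1} k^{−2j} · j!(γ)_j / ((α)_{j+1}(β)_{j+1}) for m > n ≥ 0, and G_{m,n} := 0 for m ≤ n. Then G is the Green function of the Jacobi matrix with these parameters, i.e., for all m, n ≥ 0: a_{m−1}·G_{m−1,n} + b_m·G_{m,n} + a_m·G_{m+1,n} = 1 if m = n and = 0 otherwise, where for m = 0 the term a_{m−1}·G_{m−1,n} is absent (taken to be 0). -/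
/-- The Pochhammer symbol `(x)_n = x(x+1)⋯(x+n-1)` for a real `x`. -/
noncomputable def pochR (x : ℝ) (n : ℕ) : ℝ := ∏ i ∈ Finset.range n, (x + (i : ℝ))

/-- The subdiagonal Jacobi parameters `a_n = k √((n+1)(n+α)(n+β)(n+γ))`. -/
noncomputable def jacA (k α β γ : ℝ) (n : ℕ) : ℝ :=
  k * Real.sqrt (((n : ℝ) + 1) * ((n : ℝ) + α) * ((n : ℝ) + β) * ((n : ℝ) + γ))

/-- The diagonal Jacobi parameters `b_n = k²(n+α)(n+β) + n(n+γ-1)`. -/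
noncomputable def jacB (k α β γ : ℝ) (n : ℕ) : ℝ :=
  k ^ 2 * ((n : ℝ) + α) * ((n : ℝ) + β) + (n : ℝ) * ((n : ℝ) + γ - 1)

/-- The claimed Green function: zero for `m ≤ n`, and for `m > n` given by
`(-1)^{m+n+1} k^{m+n-2} √((α)_m(α)_n(β)_m(β)_n/(m! n! (γ)_m(γ)_n)) ·
  Σ_{j=n}^{m-1} k^{-2j} j!(γ)_j/((α)_{j+1}(β)_{j+1})`. -/
noncomputable def greenG (k α β γ : ℝ) (m n : ℕ) : ℝ :=
  if m ≤ n then 0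
  else
    (-1 : ℝ) ^ (m + n + 1) * k ^ ((m : ℤ) + (n : ℤ) - 2) *
      Real.sqrt (pochR α m * pochR α n * pochR β m * pochR β n /
        ((Nat.factorial m : ℝ) * (Nat.factorial n : ℝ) * pochR γ m * pochR γ n)) *
      ∑ j ∈ Finset.Ico n m,
        k ^ (-(2 : ℤ) * (j : ℤ)) * (Nat.factorial j : ℝ) * pochR γ j /
          (pochR α (j + 1) * pochR β (j + 1))

theorem pochR_pos' (x : ℝ) (hx : 0 < x) (n : ℕ) : 0 < pochR x n := by
  unfold pochR
  exact Finset.prod_pos (fun i _ => by positivity)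

theorem pochR_succ' (x : ℝ) (n : ℕ) : pochR x (n + 1) = pochR x n * (x + n) := by
  unfold pochR
  rw [Finset.prod_range_succ]

/-- The weights. -/
noncomputable def wW (α β γ : ℝ) (n : ℕ) : ℝ :=
  Real.sqrt (pochR α n * pochR β n / ((Nat.factorial n : ℝ) * pochR γ n))

/-- The homogeneous solution. -/
noncomputable def pP (k α β γ : ℝ) (n : ℕ) : ℝ := (-k) ^ n * wW α β γ n

/-- The summand. -/
noncomputable def sS (k α β γ : ℝ) (j : ℕ) : ℝ :=
  k ^ (-(2 : ℤ) * (j : ℤ)) * (Nat.factorial j : ℝ) * pochR γ j /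
          (pochR α (j + 1) * pochR β (j + 1))

theorem greenG_eq' (k α β γ : ℝ) (hk0 : 0 < k)
    (hα : 0 < α) (hβ : 0 < β) (hγ : 0 < γ) (m n : ℕ) :
    greenG k α β γ m n = -(k ^ 2)⁻¹ * pP k α β γ m * pP k α β γ n *
      ∑ j ∈ Finset.Ico n m, sS k α β γ j := by
  unfold greenG
  split_ifs with h
  · rw [Finset.Ico_eq_empty_of_le h]; simp
  · have h1 := pochR_pos' α hα
    have h2 := pochR_pos' β hβ
    have h3 := pochR_pos' γ hγ
    have e : pochR α m * pochR α n * pochR β m * pochR β n /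
        ((Nat.factorial m : ℝ) * (Nat.factorial n : ℝ) * pochR γ m * pochR γ n) =
        (pochR α m * pochR β m / ((Nat.factorial m : ℝ) * pochR γ m)) *
        (pochR α n * pochR β n / ((Nat.factorial n : ℝ) * pochR γ n)) := by
      rw [div_mul_div_comm]; congr 1 <;> ring
    have hnn : 0 ≤ pochR α m * pochR β m / ((Nat.factorial m : ℝ) * pochR γ m) := by
      have := h1 m; have := h2 m; have := h3 m
      positivity
    have ek : k ^ ((m : ℤ) + (n : ℤ) - 2) = k ^ m * k ^ n * (k ^ 2)⁻¹ := by
      rw [zpow_sub₀ hk0.ne', zpow_add₀ hk0.ne', div_eq_mul_inv]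
      norm_cast
    rw [e, Real.sqrt_mul hnn, ek]
    unfold pP wW sS
    rw [neg_pow k m, neg_pow k n]
    ring

theorem wW_succ' (α β γ : ℝ) (hα : 0 < α) (hβ : 0 < β) (hγ : 0 < γ) (m : ℕ) :
    Real.sqrt (((m : ℝ) + 1) * ((m : ℝ) + α) * ((m : ℝ) + β) * ((m : ℝ) + γ)) *
      wW α β γ (m + 1) = (m + α) * (m + β) * wW α β γ m := by
  have h1 := pochR_pos' α hα m
  have h2 := pochR_pos' β hβ m
  have h3 := pochR_pos' γ hγ m
  unfold wW
  rw [← Real.sqrt_mul (by positivity)]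
  have : ((m : ℝ) + α) * (m + β) = Real.sqrt ((((m : ℝ) + α) * (m + β)) ^ 2) :=
    (Real.sqrt_sq (by positivity)).symm
  rw [this, ← Real.sqrt_mul (by positivity)]
  congr 1
  rw [pochR_succ', pochR_succ', pochR_succ', Nat.factorial_succ]
  push_cast
  field_simp
  ring

theorem wW_pred' (α β γ : ℝ) (hα : 0 < α) (hβ : 0 < β) (hγ : 0 < γ) (m : ℕ) :
    Real.sqrt (((m : ℝ) + 1) * ((m : ℝ) + α) * ((m : ℝ) + β) * ((m : ℝ) + γ)) *
      wW α β γ m = (m + 1) * (m + γ) * wW α β γ (m + 1) := by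
  have h1 := pochR_pos' α hα m
  have h2 := pochR_pos' β hβ m
  have h3 := pochR_pos' γ hγ m
  unfold wW
  rw [← Real.sqrt_mul (by positivity)]
  have : ((m : ℝ) + 1) * (m + γ) = Real.sqrt ((((m : ℝ) + 1) * (m + γ)) ^ 2) :=
    (Real.sqrt_sq (by positivity)).symm
  rw [this, ← Real.sqrt_mul (by positivity)]
  congr 1
  rw [pochR_succ', pochR_succ', pochR_succ', Nat.factorial_succ]
  push_cast
  field_simp
  ring

theorem jacA_succ' (k α β γ : ℝ) (hα : 0 < α) (hβ : 0 < β) (hγ : 0 < γ) (m : ℕ) :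
    jacA k α β γ m * pP k α β γ (m + 1) = - k ^ 2 * (m + α) * (m + β) * pP k α β γ m := by
  unfold jacA pP
  linear_combination k * (-k) ^ (m + 1) * wW_succ' α β γ hα hβ hγ m

theorem jacA_pred' (k α β γ : ℝ) (hα : 0 < α) (hβ : 0 < β) (hγ : 0 < γ) (m : ℕ) :
    jacA k α β γ m * pP k α β γ m = - (m + 1) * (m + γ) * pP k α β γ (m + 1) := by
  unfold jacA pP
  linear_combination k * (-k) ^ m * wW_pred' α β γ hα hβ hγ m

theorem zpow_aux' (k : ℝ) (j : ℕ) : k ^ (-(2 : ℤ) * (j : ℤ)) = (k ^ (2 * j))⁻¹ := by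
  rw [neg_mul, zpow_neg]
  norm_cast

theorem sS_succ' (k α β γ : ℝ) (hk0 : 0 < k)
    (hα : 0 < α) (hβ : 0 < β) (hγ : 0 < γ) (m : ℕ) :
    k ^ 2 * ((m + 1 : ℕ) + α) * ((m + 1 : ℕ) + β) * sS k α β γ (m + 1) =
      (m + 1) * (m + γ) * sS k α β γ m := by
  have h1 := pochR_pos' α hα m
  have h2 := pochR_pos' β hβ m
  have h3 := pochR_pos' γ hγ m
  unfold sS
  rw [zpow_aux', zpow_aux', pochR_succ' α (m + 1), pochR_succ' β (m + 1), pochR_succ' γ m,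
    pochR_succ' α m, pochR_succ' β m, Nat.factorial_succ]
  push_cast
  field_simp
  ring

theorem diag' (k α β γ : ℝ) (hk0 : 0 < k)
    (hα : 0 < α) (hβ : 0 < β) (hγ : 0 < γ) (m : ℕ) :
    pP k α β γ m ^ 2 * ((m + α) * (m + β) * sS k α β γ m) = 1 := by
  have h1 := pochR_pos' α hα m
  have h2 := pochR_pos' β hβ m
  have h3 := pochR_pos' γ hγ m
  unfold sS pP wW
  rw [mul_pow, Real.sq_sqrt (by positivity), zpow_aux', pochR_succ' α m, pochR_succ' β m,
    ← pow_mul, mul_comm m 2, pow_mul (-k), neg_sq, ← pow_mul]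
  field_simp
  ring

/-- The matrix `greenG` is the Green function of the Jacobi matrix with parameters
`jacA`, `jacB`, i.e. `J G = I` entrywise (the term with index `m - 1` is absent
when `m = 0`). -/
theorem greenG_is_green_function (k α β γ : ℝ) (hk0 : 0 < k) (hk1 : k < 1)
    (hα : 0 < α) (hβ : 0 < β) (hγ : 0 < γ) :
    ∀ m n : ℕ,
      (if m = 0 then 0 else jacA k α β γ (m - 1) * greenG k α β γ (m - 1) n) +
        jacB k α β γ m * greenG k α β γ m n +
        jacA k α β γ m * greenG k α β γ (m + 1) n =
      if m = n then 1 else 0 := by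
  intro m n
  have hA := jacA_succ' k α β γ hα hβ hγ m
  have hG := greenG_eq' k α β γ hk0 hα hβ hγ
  have hk : (k ^ 2)⁻¹ * k ^ 2 = 1 := inv_mul_cancel₀ (by positivity)
  rcases lt_trichotomy m n with h | h | h
  · have e1 : greenG k α β γ (m - 1) n = 0 := if_pos (by omega)
    have e2 : greenG k α β γ m n = 0 := if_pos (by omega)
    have e3 : greenG k α β γ (m + 1) n = 0 := if_pos (by omega)
    simp [e1, e2, e3, h.ne]
  · subst h
    have e1 : greenG k α β γ (m - 1) m = 0 := if_pos (by omega)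
    have e2 : greenG k α β γ m m = 0 := if_pos (by omega)
    have d := diag' k α β γ hk0 hα hβ hγ m
    rw [e1, e2, hG (m + 1) m]
    simp only [Nat.Ico_succ_singleton, Finset.sum_singleton, mul_zero, ite_self, if_true]
    linear_combination -(k ^ 2)⁻¹ * pP k α β γ m * sS k α β γ m * hA + (k ^ 2)⁻¹ * k ^ 2 * d + hk
  · obtain ⟨m, rfl⟩ : ∃ l, m = l + 1 := ⟨m - 1, by omega⟩
    have hB := jacA_pred' k α β γ hα hβ hγ m
    have hS := sS_succ' k α β γ hk0 hα hβ hγ m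
    rw [if_neg (by omega), if_neg (by omega), Nat.add_sub_cancel, hG m, hG (m + 1), hG (m + 1 + 1),
      Finset.sum_Ico_succ_top (by omega : n ≤ m + 1), Finset.sum_Ico_succ_top (by omega : n ≤ m)]
    unfold jacB
    set T := ∑ j ∈ Finset.Ico n m, sS k α β γ j
    push_cast at *
    linear_combination -(k ^ 2)⁻¹ * pP k α β γ n * T * hB
      - (k ^ 2)⁻¹ * pP k α β γ n * (T + sS k α β γ m + sS k α β γ (m + 1)) * hA
      + (k ^ 2)⁻¹ * pP k α β γ n * pP k α β γ (m + 1) * hS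
end

section
/- Let a_n > 0 and b_n, d_n be real sequences. Let G be strictly lower triangular (G_{m,n} = 0 for m ≤ n) with a_{m−1}G_{m−1,n} + b_m G_{m,n} + a_m G_{m+1,n} = δ_{m,n} for all m, n (first term absent for m = 0), and let Ǧ be strictly lower triangular with a_{m−1}Ǧ_{m−1,n} + (b_m + d_m)Ǧ_{m,n} + a_m Ǧ_{m+1,n} = δ_{m,n} for all m, n (first term absent for m = 0). Then (I + GD)Ǧ = G, i.e., for all m, n ≥ 0: Ǧ_{m,n} + Σ_{j=n+1}^{m−1} G_{m,j} · d_j · Ǧ_{j,n} = G_{m,n}. -/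
/-- For a diagonal perturbation `J̌ = J + D` of a Jacobi matrix `J` (with `D = diag(d_n)`),
the Green functions satisfy `(I + G D) Ǧ = G`, i.e. entrywise
`Ǧ_{m,n} + Σ_{j=n+1}^{m-1} G_{m,j} d_j Ǧ_{j,n} = G_{m,n}`. -/
theorem perturbed_green_relation
    (a b d : ℕ → ℝ) (ha : ∀ n, 0 < a n)
    (G Gc : ℕ → ℕ → ℝ)
    (hGtri : ∀ m n, m ≤ n → G m n = 0)
    (hGctri : ∀ m n, m ≤ n → Gc m n = 0)
    (hG : ∀ m n : ℕ,
      (if m = 0 then 0 else a (m - 1) * G (m - 1) n) + b m * G m n +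
        a m * G (m + 1) n = if m = n then 1 else 0)
    (hGc : ∀ m n : ℕ,
      (if m = 0 then 0 else a (m - 1) * Gc (m - 1) n) + (b m + d m) * Gc m n +
        a m * Gc (m + 1) n = if m = n then 1 else 0) :
    ∀ m n : ℕ, Gc m n + ∑ j ∈ Finset.Ioo n m, G m j * d j * Gc j n = G m n := by
  intro m n
  have hsum : ∑ j ∈ Finset.Ioo n m, G m j * d j * Gc j n
      = ∑ j ∈ Finset.range m, G m j * d j * Gc j n := by
    apply Finset.sum_subset
    · intro j hj
      simp only [Finset.mem_Ioo, Finset.mem_range] at hj ⊢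
      exact hj.2
    · intro j hj hj2
      simp only [Finset.mem_Ioo, Finset.mem_range, not_and] at hj hj2
      have hjn : j ≤ n := by
        by_contra h
        exact hj2 (by omega) hj
      rw [hGctri j n hjn, mul_zero]
  rw [hsum]
  have hpair : ∀ N k : ℕ, k ≤ N →
      Gc k n + ∑ j ∈ Finset.range N, G k j * d j * Gc j n = G k n := by
    intro N k
    induction k using Nat.strong_induction_on with
    | _ k ih =>
      intro hk
      rcases k with _ | k
      · have h0 : ∑ j ∈ Finset.range N, G 0 j * d j * Gc j n = 0 :=
          Finset.sum_eq_zero fun j _ => by rw [hGtri 0 j (Nat.zero_le j)]; ring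
        rw [h0, hGtri 0 n (Nat.zero_le n), hGctri 0 n (Nat.zero_le n), add_zero]
      · -- sum of the recurrences for `G` in row `k`
        have hS : ∑ j ∈ Finset.range N,
            ((if k = 0 then 0 else a (k - 1) * G (k - 1) j) + b k * G k j +
              a k * G (k + 1) j) * (d j * Gc j n) = d k * Gc k n := by
          simp only [hG, ite_mul, one_mul, zero_mul]
          rw [Finset.sum_ite_eq, if_pos (Finset.mem_range.2 (by omega))]
        have h1 := ih k (by omega) (by omega)
        have e1 := hG k n
        have e2 := hGc k n
        apply mul_left_cancel₀ (ha k).ne'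
        rcases k with _ | k
        · simp only [if_true, zero_add, add_mul, Finset.sum_add_distrib, mul_assoc,
            ← Finset.mul_sum] at hS e1 e2 h1 ⊢
          linear_combination hS + e2 - e1 - b 0 * h1
        · have h2 := ih k (by omega) (by omega)
          simp only [Nat.add_eq_zero_iff, one_ne_zero, and_false, if_false,
            Nat.add_sub_cancel, add_mul, Finset.sum_add_distrib, mul_assoc,
            ← Finset.mul_sum] at hS e1 e2 h1 h2 ⊢
          linear_combination hS + e2 - e1 - b (k + 1) * h1 - a k * h2
  exact hpair m m le_rfl
end

section
/- Let a_n > 0 and b_n, d_n be real sequences. Let G be strictly lower triangular (G_{m,n} = 0 for m ≤ n) with a_{m−1}G_{m−1,n} + b_m G_{m,n} + a_m G_{m+1,n} = δ_{m,n} for all m, n (first term absent for m = 0). Let {P_n} be the polynomial sequence determined by P_{−1}(x) = 0, P_0(x) = 1, a_{n−1}P_{n−1}(x) + (b_n − x)P_n(x) + a_n P_{n+1}(x) = 0 for n ≥ 0, and let {P̌_n} be determined by P̌_{−1}(x) = 0, P̌_0(x) = 1, a_{n−1}P̌_{n−1}(x) + (b_n + d_n − x)P̌_n(x) + a_n P̌_{n+1}(x)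 = 0 for n ≥ 0. Then for every real x and every n ≥ 0: P̌_n(x) = P_n(0) + Σ_{j=0}^{n−1} G_{n,j} · (x − d_j) · P̌_j(x). -/
/-- For a diagonal perturbation `J̌ = J + D` of a Jacobi matrix `J` with Green function `G`,
the orthonormal polynomial sequences `P` (for `J`) and `P̌` (for `J̌`) satisfy
`P̌_n(x) = P_n(0) + Σ_{j=0}^{n-1} G_{n,j} (x - d_j) P̌_j(x)`, i.e.
`P̌(x) = (I - G(xI - D))⁻¹ P(0)`. -/
theorem perturbed_polynomials_from_green
    (a b d : ℕ → ℝ) (ha : ∀ n, 0 < a n)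
    (G : ℕ → ℕ → ℝ)
    (hGtri : ∀ m n, m ≤ n → G m n = 0)
    (hG : ∀ m n : ℕ,
      (if m = 0 then 0 else a (m - 1) * G (m - 1) n) + b m * G m n +
        a m * G (m + 1) n = if m = n then 1 else 0)
    (P Pc : ℕ → ℝ → ℝ)
    (hP0 : ∀ x, P 0 x = 1)
    (hPrec : ∀ n : ℕ, ∀ x : ℝ,
      (if n = 0 then 0 else a (n - 1) * P (n - 1) x) + (b n - x) * P n x +
        a n * P (n + 1) x = 0)
    (hPc0 : ∀ x, Pc 0 x = 1)
    (hPcrec : ∀ n : ℕ, ∀ x : ℝ,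
      (if n = 0 then 0 else a (n - 1) * Pc (n - 1) x) + (b n + d n - x) * Pc n x +
        a n * Pc (n + 1) x = 0) :
    ∀ x : ℝ, ∀ n : ℕ,
      Pc n x = P n 0 + ∑ j ∈ Finset.range n, G n j * (x - d j) * Pc j x := by
  intro x
  have hS : ∀ N m, m < N →
      (if m = 0 then 0 else
        a (m - 1) * ∑ j ∈ Finset.range N, G (m - 1) j * (x - d j) * Pc j x) +
      b m * ∑ j ∈ Finset.range N, G m j * (x - d j) * Pc j x +
      a m * ∑ j ∈ Finset.range N, G (m + 1) j * (x - d j) * Pc j x =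
      (x - d m) * Pc m x := by
    intro N m hm
    have h1 : ∑ j ∈ Finset.range N, (if m = j then (1 : ℝ) else 0) * ((x - d j) * Pc j x)
        = (x - d m) * Pc m x := by
      simp [hm]
    rw [← h1]
    simp_rw [← hG]
    by_cases h : m = 0
    · simp only [h, if_true, Finset.mul_sum, zero_add, ← Finset.sum_add_distrib]
      exact Finset.sum_congr rfl fun j _ => by ring
    · simp only [h, if_false, Finset.mul_sum, ← Finset.sum_add_distrib]
      exact Finset.sum_congr rfl fun j _ => by ring
  have key : ∀ N n, n ≤ N →
      Pc n x = P n 0 + ∑ j ∈ Finset.range N, G n j * (x - d j) * Pc j x := by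
    intro N n
    induction n using Nat.strong_induction_on with
    | _ n ih =>
      intro hn
      cases n with
      | zero => simp [hP0, hPc0, hGtri]
      | succ m =>
        have e1 := hS N m (by omega)
        have e2 := hPrec m 0
        have e3 := hPcrec m x
        have i1 := ih m (by omega) (by omega)
        apply mul_left_cancel₀ (ha m).ne'
        by_cases h : m = 0
        · simp only [h, if_true] at *
          linear_combination e3 - e2 - e1 - b 0 * i1
        · have i2 := ih (m - 1) (by omega) (by omega)
          simp only [h, if_false] at e1 e2 e3
          linear_combination e3 - e2 - e1 - b m * i1 - a (m - 1) * i2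
  intro n
  exact key n n le_rfl
end

section
/- Let a_n > 0 and b_n, d_n be real sequences. Let G be strictly lower triangular (G_{m,n} = 0 for m ≤ n) with a_{m−1}G_{m−1,n} + b_m G_{m,n} + a_m G_{m+1,n} = δ_{m,n} for all m, n (first term absent for m = 0). Let {P_n} be the polynomial sequence determined by P_{−1}(x) = 0, P_0(x) = 1, a_{n−1}P_{n−1}(x) + (b_n − x)P_n(x) + a_n P_{n+1}(x) = 0, and {P̌_n} the sequence determined the same way with b_n replaced by b_n + d_n. Then for every n ≥ 0: P̌_n(0) + Σ_{j=0}^{n−1} G_{n,j} · d_j · P̌_j(0) = P_n(0), i.e., P̌(0) = (I + GD)^{−1} P(0). -/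
/-- For a diagonal perturbation `J̌ = J + D` of a Jacobi matrix `J` with Green function `G`,
the orthonormal polynomial sequences `P` (for `J`) and `P̌` (for `J̌`) satisfy
`P̌_n(0) + Σ_{j=0}^{n-1} G_{n,j} d_j P̌_j(0) = P_n(0)`, i.e. `P̌(0) = (I + GD)⁻¹ P(0)`. -/
theorem perturbed_polynomials_at_zero
    (a b d : ℕ → ℝ) (ha : ∀ n, 0 < a n)
    (G : ℕ → ℕ → ℝ)
    (hGtri : ∀ m n, m ≤ n → G m n = 0)
    (hG : ∀ m n : ℕ,
      (if m = 0 then 0 else a (m - 1) * G (m - 1) n) + b m * G m n +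
        a m * G (m + 1) n = if m = n then 1 else 0)
    (P Pc : ℕ → ℝ → ℝ)
    (hP0 : ∀ x, P 0 x = 1)
    (hPrec : ∀ n : ℕ, ∀ x : ℝ,
      (if n = 0 then 0 else a (n - 1) * P (n - 1) x) + (b n - x) * P n x +
        a n * P (n + 1) x = 0)
    (hPc0 : ∀ x, Pc 0 x = 1)
    (hPcrec : ∀ n : ℕ, ∀ x : ℝ,
      (if n = 0 then 0 else a (n - 1) * Pc (n - 1) x) + (b n + d n - x) * Pc n x +
        a n * Pc (n + 1) x = 0) :
    ∀ n : ℕ, Pc n 0 + ∑ j ∈ Finset.range n, G n j * d j * Pc j 0 = P n 0 := by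
  have hS2 : ∀ m, ∑ j ∈ Finset.range (m + 1), G m j * d j * Pc j 0
      = ∑ j ∈ Finset.range m, G m j * d j * Pc j 0 := by
    intro m
    rw [Finset.sum_range_succ, hGtri m m le_rfl]
    ring
  have hS3 : ∀ m, ∑ j ∈ Finset.range (m + 2), G m j * d j * Pc j 0
      = ∑ j ∈ Finset.range m, G m j * d j * Pc j 0 := by
    intro m
    rw [Finset.sum_range_succ, hGtri m (m + 1) (Nat.le_succ m), hS2]
    ring
  have key : ∀ n, (Pc n 0 + ∑ j ∈ Finset.range n, G n j * d j * Pc j 0 = P n 0) ∧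
      (Pc (n + 1) 0 + ∑ j ∈ Finset.range (n + 1), G (n + 1) j * d j * Pc j 0 = P (n + 1) 0) := by
    intro n
    induction n with
    | zero =>
      refine ⟨by simp [hP0, hPc0], ?_⟩
      have h1 := hG 0 0
      have h2 := hPrec 0 0
      have h3 := hPcrec 0 0
      simp [hP0, hPc0, hGtri 0 0 le_rfl] at h1 h2 h3
      simp only [zero_add, Finset.sum_range_one, hPc0]
      apply mul_left_cancel₀ (ha 0).ne'
      linear_combination h3 - h2 + d 0 * h1
    | succ n ih =>
      obtain ⟨i1, i2⟩ := ih
      refine ⟨i2, ?_⟩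
      have h2 := hPrec (n + 1) 0
      have h3 := hPcrec (n + 1) 0
      simp only [Nat.add_eq_zero_iff, one_ne_zero, and_false, if_false, Nat.add_sub_cancel] at h2 h3
      have hs : a n * ∑ j ∈ Finset.range (n + 2), G n j * d j * Pc j 0
          + b (n + 1) * ∑ j ∈ Finset.range (n + 2), G (n + 1) j * d j * Pc j 0
          + a (n + 1) * ∑ j ∈ Finset.range (n + 2), G (n + 2) j * d j * Pc j 0
          = d (n + 1) * Pc (n + 1) 0 := by
        rw [Finset.mul_sum, Finset.mul_sum, Finset.mul_sum, ← Finset.sum_add_distrib,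
          ← Finset.sum_add_distrib]
        have : ∀ j ∈ Finset.range (n + 2), a n * (G n j * d j * Pc j 0)
            + b (n + 1) * (G (n + 1) j * d j * Pc j 0)
            + a (n + 1) * (G (n + 2) j * d j * Pc j 0)
            = if n + 1 = j then d j * Pc j 0 else 0 := by
          intro j _
          have h := hG (n + 1) j
          simp only [Nat.add_eq_zero_iff, one_ne_zero, and_false, if_false,
            Nat.add_sub_cancel] at h
          split_ifs at h ⊢ <;> linear_combination (d j * Pc j 0) * h
        rw [Finset.sum_congr rfl this, Finset.sum_ite_eq]
        simp
      rw [hS3, hS2 (n + 1)] at hs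
      apply mul_left_cancel₀ (ha (n + 1)).ne'
      linear_combination hs + h3 - h2 - a n * i1 - b (n + 1) * i2
  exact fun n => (key n).1
end

section
/- Let α, β, γ ∈ ℂ with none of α, β, γ a nonpositive integer, let δ, w ∈ ℂ, and let k ∈ (0,1). Define f_{m,n} and c_n as in the context. Then the sequence {c_n} satisfies the recurrence of the local Heun solution: c_0 = 1, γ·c_1 = k²αβ − w, and for every n ≥ 1: (n−1+α)(n−1+β)·c_{n−1} − [ n·((n−1+γ)(1 + 1/k²) + δ/k² + α + β − γ − δ + 1) − w/k² + αβ ]·c_n + ((n+1)(n+γ)/k²)·c_{n+1} = 0. Consequently Σ c_n z^n is the local Heun solution Hℓ(1/k², −w/k² + αβ; α, β, γ, δ; z). -/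
/-- The Pochhammer symbol `(x)_n = x(x+1)⋯(x+n-1)`. -/
noncomputable def poch (x : ℂ) (n : ℕ) : ℂ := ∏ i ∈ Finset.range n, (x + (i : ℂ))

/-- The index set of tuples `(ℓ_1, j_1, …, ℓ_m, j_m)` with
`0 ≤ ℓ_1 ≤ j_1 < ℓ_2 ≤ j_2 < ⋯ < ℓ_m ≤ j_m < n`, encoded as pairs of functions
`(ℓ, j) : (Fin m → Fin n) × (Fin m → Fin n)`. -/
def heunIdx (m n : ℕ) : Finset ((Fin m → Fin n) × (Fin m → Fin n)) :=
  Finset.univ.filter fun p =>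
    (∀ s : Fin m, (p.1 s : ℕ) ≤ (p.2 s : ℕ)) ∧
    (∀ s t : Fin m, (s : ℕ) + 1 = (t : ℕ) → (p.2 s : ℕ) < (p.1 t : ℕ))

/-- The coefficients `f_{m,n}`: `f_{0,n} = k^{2n}`; for `1 ≤ m ≤ n`,
`f_{m,n} = (-1)^m k^{2n-2m} Σ ∏_{s=1}^m [j_s!(γ)_{j_s}(α)_{ℓ_s}(β)_{ℓ_s} /
(ℓ_s!(γ)_{ℓ_s}(α)_{j_s+1}(β)_{j_s+1})] k^{-2(j_s-ℓ_s)} (w - (1-k²)δℓ_s)`,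
the sum running over `heunIdx m n`; and `f_{m,n} = 0` for `m < 0` or `m > n`. -/
noncomputable def heunf (k : ℝ) (α β γ δ w : ℂ) (m : ℤ) (n : ℕ) : ℂ :=
  if m = 0 then (k : ℂ) ^ (2 * n)
  else if m < 0 ∨ (n : ℤ) < m then 0
  else (-1 : ℂ) ^ m.toNat * (k : ℂ) ^ (2 * (n : ℤ) - 2 * m) *
    ∑ p ∈ heunIdx m.toNat n, ∏ s : Fin m.toNat,
      ((Nat.factorial (p.2 s : ℕ) : ℂ) * poch γ (p.2 s : ℕ) * poch α (p.1 s : ℕ) *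
          poch β (p.1 s : ℕ)) /
        ((Nat.factorial (p.1 s : ℕ) : ℂ) * poch γ (p.1 s : ℕ) * poch α ((p.2 s : ℕ) + 1) *
          poch β ((p.2 s : ℕ) + 1)) *
      (k : ℂ) ^ (-(2 : ℤ) * (((p.2 s : ℕ) : ℤ) - ((p.1 s : ℕ) : ℤ))) *
      (w - (1 - (k : ℂ) ^ 2) * δ * ((p.1 s : ℕ) : ℂ))

/-- The Taylor coefficients `c_n = ((α)_n (β)_n / (n! (γ)_n)) Σ_{m=0}^n f_{m,n}`
of the local Heun solution. -/
noncomputable def heunc (k : ℝ) (α β γ δ w : ℂ) (n : ℕ) : ℂ :=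
  poch α n * poch β n / ((Nat.factorial n : ℂ) * poch γ n) *
    ∑ m ∈ Finset.range (n + 1), heunf k α β γ δ w (m : ℤ) n

/-- Index set with natural number values. -/
def hI (m n : ℕ) : Finset ((Fin m → ℕ) × (Fin m → ℕ)) :=
  ((Fintype.piFinset fun _ => Finset.range n) ×ˢ (Fintype.piFinset fun _ => Finset.range n)).filter
    fun p => (∀ s : Fin m, p.1 s ≤ p.2 s) ∧
      (∀ s t : Fin m, (s : ℕ) + 1 = (t : ℕ) → p.2 s < p.1 t)

/-- Sum over the index set. -/
noncomputable def hT (g : ℕ → ℕ → ℂ) (m n : ℕ) : ℂ :=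
  ∑ p ∈ hI m n, ∏ s : Fin m, g (p.1 s) (p.2 s)

lemma mem_hI {m n : ℕ} {p : (Fin m → ℕ) × (Fin m → ℕ)} :
    p ∈ hI m n ↔ (∀ s, p.2 s < n) ∧ (∀ s : Fin m, p.1 s ≤ p.2 s) ∧
      (∀ s t : Fin m, (s : ℕ) + 1 = (t : ℕ) → p.2 s < p.1 t) := by
  simp only [hI, Finset.mem_filter, Finset.mem_product, Fintype.mem_piFinset, Finset.mem_range]
  constructor
  · rintro ⟨⟨h1, h2⟩, h3, h4⟩
    exact ⟨h2, h3, h4⟩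
  · rintro ⟨h2, h3, h4⟩
    exact ⟨⟨fun s => lt_of_le_of_lt (h3 s) (h2 s), h2⟩, h3, h4⟩

lemma sum_heunIdx (g : ℕ → ℕ → ℂ) (m n : ℕ) :
    ∑ p ∈ heunIdx m n, ∏ s : Fin m, g (p.1 s : ℕ) (p.2 s : ℕ) = hT g m n := by
  unfold hT
  refine Finset.sum_bij (fun p _ => (fun s => (p.1 s : ℕ), fun s => (p.2 s : ℕ))) ?_ ?_ ?_ ?_
  · intro p hp
    simp only [heunIdx, Finset.mem_filter, Finset.mem_univ, true_and] at hp
    rw [mem_hI]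
    exact ⟨fun s => (p.2 s).2, hp.1, hp.2⟩
  · intro p _ q _ h
    simp only [Prod.mk.injEq] at h
    refine Prod.ext ?_ ?_
    · funext s
      exact Fin.ext (congrFun h.1 s)
    · funext s
      exact Fin.ext (congrFun h.2 s)
  · intro q hq
    rw [mem_hI] at hq
    refine ⟨(fun s => ⟨q.1 s, lt_of_le_of_lt (hq.2.1 s) (hq.1 s)⟩, fun s => ⟨q.2 s, hq.1 s⟩), ?_, rfl⟩
    simp only [heunIdx, Finset.mem_filter, Finset.mem_univ, true_and]
    exact ⟨hq.2.1, hq.2.2⟩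
  · intro p _
    rfl

lemma hI_le_last {m n : ℕ} {p : (Fin (m+1) → ℕ) × (Fin (m+1) → ℕ)} (hp : p ∈ hI (m+1) n)
    (s : Fin (m+1)) : p.2 s ≤ p.2 (Fin.last m) := by
  rw [mem_hI] at hp
  have : StrictMono p.2 := by
    rw [Fin.strictMono_iff_lt_succ]
    intro i
    exact lt_of_lt_of_le (hp.2.2 i.castSucc i.succ (by simp)) (hp.2.1 _)
  exact this.monotone (Fin.le_last s)

lemma hT_zero (g : ℕ → ℕ → ℂ) (n : ℕ) : hT g 0 n = 1 := by
  simp [hT, hI]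

lemma hT_succ_zero (g : ℕ → ℕ → ℂ) (m : ℕ) : hT g (m+1) 0 = 0 := by
  unfold hT
  refine Finset.sum_eq_zero ?_
  intro p hp
  rw [mem_hI] at hp
  exact absurd (hp.1 0) (by simp)

lemma hT_succ_succ (g : ℕ → ℕ → ℂ) (m n : ℕ) :
    hT g (m+1) (n+1) = hT g (m+1) n + ∑ l ∈ Finset.range (n+1), g l n * hT g m l := by
  unfold hT
  rw [← Finset.sum_filter_not_add_sum_filter (hI (m+1) (n+1)) (fun p => p.2 (Fin.last m) = n)]
  congr 1
  · refine Finset.sum_congr ?_ (fun _ _ => rfl)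
    ext p
    rw [Finset.mem_filter]
    constructor
    · rintro ⟨h, hn⟩
      have hl := hI_le_last h
      rw [mem_hI] at h ⊢
      refine ⟨fun s => ?_, h.2⟩
      have h1 := hl s
      have h2 := h.1 (Fin.last m)
      omega
    · intro h
      rw [mem_hI] at h ⊢
      exact ⟨⟨fun s => (h.1 s).trans (Nat.lt_succ_self n), h.2⟩, (h.1 _).ne⟩
  · simp_rw [Finset.mul_sum]
    rw [Finset.sum_sigma']
    refine Finset.sum_bij'
      (fun p _ => (⟨p.1 (Fin.last m), (Fin.init p.1, Fin.init p.2)⟩ :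
        Σ _ : ℕ, (Fin m → ℕ) × (Fin m → ℕ)))
      (fun q _ => (Fin.snoc q.2.1 q.1, Fin.snoc q.2.2 n)) ?_ ?_ ?_ ?_ ?_
    · intro p hp
      rw [Finset.mem_filter] at hp
      obtain ⟨hp, hn⟩ := hp
      have hl := hI_le_last hp
      rw [mem_hI] at hp
      rw [Finset.mem_sigma, mem_hI, Finset.mem_range]
      refine ⟨lt_of_le_of_lt (hp.2.1 _) (hp.1 _), ?_, fun s => hp.2.1 _, fun s t h => hp.2.2 _ _ (by simpa using h)⟩
      intro s
      cases m with
      | zero => exact s.elim0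
      | succ m =>
        have hq : p ∈ hI (m+1+1) (n+1) := mem_hI.2 hp
        have h3 := hp.2.2 (Fin.last m).castSucc (Fin.last (m+1)) (by simp)
        refine lt_of_le_of_lt ?_ h3
        have : StrictMono p.2 := by
          rw [Fin.strictMono_iff_lt_succ]
          intro i
          exact lt_of_lt_of_le (hp.2.2 i.castSucc i.succ (by simp)) (hp.2.1 _)
        exact this.monotone (Fin.castSucc_le_castSucc_iff.2 (Fin.le_last s))
    · rintro ⟨l, a, b⟩ hq
      rw [Finset.mem_sigma, mem_hI, Finset.mem_range] at hq
      obtain ⟨hl, h1, h2, h3⟩ := hq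
      dsimp only at hl h1 h2 h3
      rw [Finset.mem_filter, mem_hI]
      refine ⟨⟨?_, ?_, ?_⟩, by simp⟩
      · intro s
        refine Fin.lastCases ?_ (fun i => ?_) s
        · simp
        · have := h1 i
          simp only [Fin.snoc_castSucc]
          omega
      · intro s
        refine Fin.lastCases ?_ (fun i => ?_) s
        · simp only [Fin.snoc_last]
          omega
        · simpa using h2 i
      · intro s t
        refine Fin.lastCases ?_ (fun i => ?_) s
        · intro h
          have := t.2
          simp at h
          omega
        · refine Fin.lastCases ?_ (fun j => ?_) t
          · intro _
            simpa using h1 i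
          · intro h
            simpa using h3 i j (by simpa using h)
    · intro p hp
      rw [Finset.mem_filter] at hp
      refine Prod.ext ?_ ?_
      · simp
      · dsimp only
        rw [← hp.2]
        simp
    · rintro ⟨l, a, b⟩ hq
      simp
    · intro p hp
      rw [Finset.mem_filter] at hp
      rw [Fin.prod_univ_castSucc, hp.2, mul_comm]
      rfl

lemma hT_eq_zero (g : ℕ → ℕ → ℂ) (m n : ℕ) (h : n < m) : hT g m n = 0 := by
  induction n using Nat.strong_induction_on generalizing m with
  | _ n ih =>
    obtain ⟨m, rfl⟩ : ∃ r, m = r + 1 := ⟨m - 1, by omega⟩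
    cases n with
    | zero => exact hT_succ_zero g m
    | succ n =>
      rw [hT_succ_succ, ih n (by omega) _ (by omega), zero_add]
      refine Finset.sum_eq_zero fun l hl => ?_
      rw [Finset.mem_range] at hl
      rw [ih l (by omega) _ (by omega), mul_zero]

/-- ratio -/
noncomputable def hR (α β γ : ℂ) (l j : ℕ) : ℂ :=
  ((Nat.factorial j : ℂ) * poch γ j * poch α l * poch β l) /
        ((Nat.factorial l : ℂ) * poch γ l * poch α (j + 1) * poch β (j + 1))

/-- weight -/
noncomputable def hg (k : ℝ) (α β γ δ w : ℂ) (l j : ℕ) : ℂ :=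
  hR α β γ l j * (k : ℂ) ^ (-(2 : ℤ) * ((j : ℤ) - (l : ℤ))) * (w - (1 - (k : ℂ) ^ 2) * δ * (l : ℂ))

lemma heunf_eq (k : ℝ) (α β γ δ w : ℂ) (m n : ℕ) :
    heunf k α β γ δ w (m : ℤ) n =
      (-1 : ℂ) ^ m * (k : ℂ) ^ (2 * (n : ℤ) - 2 * (m : ℤ)) * hT (hg k α β γ δ w) m n := by
  unfold heunf
  split_ifs with h1 h2
  · have : m = 0 := by exact_mod_cast h1
    subst this
    rw [hT_zero]
    simp only [pow_zero, Nat.cast_zero, mul_zero, sub_zero, one_mul, mul_one]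
    norm_cast
  · rw [hT_eq_zero _ _ _ (by omega), mul_zero]
  · rw [← sum_heunIdx]
    rfl

lemma heunf_succ_succ (k : ℝ) (hk0 : 0 < k) (α β γ δ w : ℂ) (m n : ℕ) :
    heunf k α β γ δ w ((m + 1 : ℕ) : ℤ) (n + 1) =
      (k : ℂ) ^ 2 * heunf k α β γ δ w ((m + 1 : ℕ) : ℤ) n -
      ∑ l ∈ Finset.range (n + 1), hR α β γ l n * (w - (1 - (k : ℂ) ^ 2) * δ * (l : ℂ)) *
        heunf k α β γ δ w (m : ℤ) l := by
  have hk : (k : ℂ) ≠ 0 := by exact_mod_cast hk0.ne'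
  simp only [heunf_eq]
  rw [hT_succ_succ, mul_add, sub_eq_add_neg (_ * _) (Finset.sum _ _)]
  congr 1
  · have : (2 * ((n + 1 : ℕ) : ℤ) - 2 * ((m + 1 : ℕ) : ℤ)) = 2 + (2 * (n : ℤ) - 2 * ((m + 1 : ℕ) : ℤ)) := by
      push_cast; ring
    have h2 : (k : ℂ) ^ (2 : ℤ) = (k : ℂ) ^ 2 := by norm_cast
    rw [this, zpow_add₀ hk, h2]
    ring
  · rw [Finset.mul_sum, ← Finset.sum_neg_distrib]
    refine Finset.sum_congr rfl fun l _ => ?_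
    have : (2 * (l : ℤ) - 2 * (m : ℤ)) =
        (2 * ((n + 1 : ℕ) : ℤ) - 2 * ((m + 1 : ℕ) : ℤ)) + (-(2 : ℤ) * ((n : ℤ) - (l : ℤ))) := by
      push_cast; ring
    rw [this, zpow_add₀ hk]
    unfold hg
    ring

/-- inner sum -/
noncomputable def hS (k : ℝ) (α β γ δ w : ℂ) (n : ℕ) : ℂ :=
  ∑ m ∈ Finset.range (n + 1), heunf k α β γ δ w (m : ℤ) n

lemma hS_eq (k : ℝ) (α β γ δ w : ℂ) (n N : ℕ) (h : n < N) :
    ∑ m ∈ Finset.range N, heunf k α β γ δ w (m : ℤ) n = hS k α β γ δ w n := by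
  unfold hS
  symm
  refine Finset.sum_subset ?_ ?_
  · intro x
    simp only [Finset.mem_range]
    omega
  · intro x _ hx
    rw [Finset.mem_range] at hx
    rw [heunf_eq, hT_eq_zero _ _ _ (by omega), mul_zero]

lemma hS_succ (k : ℝ) (hk0 : 0 < k) (α β γ δ w : ℂ) (n : ℕ) :
    hS k α β γ δ w (n + 1) = (k : ℂ) ^ 2 * hS k α β γ δ w n -
      ∑ l ∈ Finset.range (n + 1), hR α β γ l n * (w - (1 - (k : ℂ) ^ 2) * δ * (l : ℂ)) *
        hS k α β γ δ w l := by
  have h0 : heunf k α β γ δ w ((0 : ℕ) : ℤ) (n + 1) =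
      (k : ℂ) ^ 2 * heunf k α β γ δ w ((0 : ℕ) : ℤ) n := by
    simp only [heunf, Nat.cast_zero, if_true]
    ring
  rw [← hS_eq k α β γ δ w n (n + 1 + 1) (by omega)]
  conv_lhs => unfold hS
  rw [Finset.sum_range_succ' _ (n + 1), Finset.sum_range_succ' _ (n + 1), h0]
  simp only [heunf_succ_succ k hk0]
  rw [Finset.sum_sub_distrib, ← Finset.mul_sum, Finset.sum_comm (s := Finset.range (n + 1)) (t := Finset.range (n + 1))]
  have h1 : ∑ l ∈ Finset.range (n + 1), ∑ m ∈ Finset.range (n + 1),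
      hR α β γ l n * (w - (1 - (k : ℂ) ^ 2) * δ * (l : ℂ)) * heunf k α β γ δ w (m : ℤ) l =
      ∑ l ∈ Finset.range (n + 1), hR α β γ l n * (w - (1 - (k : ℂ) ^ 2) * δ * (l : ℂ)) *
        hS k α β γ δ w l := by
    refine Finset.sum_congr rfl fun l hl => ?_
    rw [← Finset.mul_sum, hS_eq k α β γ δ w l (n + 1) (Finset.mem_range.1 hl)]
  rw [h1]
  ring

lemma poch_succ (x : ℂ) (n : ℕ) : poch x (n + 1) = poch x n * (x + n) := by
  unfold poch
  rw [Finset.prod_range_succ]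

lemma add_nat_ne (x : ℂ) (hx : ∀ j : ℕ, x ≠ -(j : ℂ)) (n : ℕ) : x + (n : ℂ) ≠ 0 :=
  fun h => hx n (eq_neg_of_add_eq_zero_left h)

lemma poch_ne (x : ℂ) (hx : ∀ j : ℕ, x ≠ -(j : ℂ)) (n : ℕ) : poch x n ≠ 0 :=
  Finset.prod_ne_zero_iff.2 fun i _ => add_nat_ne x hx i

lemma hR_self (α β γ : ℂ) (hα : ∀ j : ℕ, α ≠ -(j : ℂ)) (hβ : ∀ j : ℕ, β ≠ -(j : ℂ))
    (hγ : ∀ j : ℕ, γ ≠ -(j : ℂ)) (n : ℕ) :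
    (α + n) * (β + n) * hR α β γ n n = 1 := by
  unfold hR
  have h1 := poch_ne α hα n
  have h2 := poch_ne β hβ n
  have h3 := poch_ne γ hγ n
  have h4 : (Nat.factorial n : ℂ) ≠ 0 := by exact_mod_cast Nat.factorial_ne_zero n
  have h5 := add_nat_ne α hα n
  have h6 := add_nat_ne β hβ n
  rw [poch_succ, poch_succ]
  field_simp

lemma hR_succ (α β γ : ℂ) (hα : ∀ j : ℕ, α ≠ -(j : ℂ)) (hβ : ∀ j : ℕ, β ≠ -(j : ℂ))
    (hγ : ∀ j : ℕ, γ ≠ -(j : ℂ)) (l n : ℕ) :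
    (α + ((n + 1 : ℕ) : ℂ)) * (β + ((n + 1 : ℕ) : ℂ)) * hR α β γ l (n + 1) =
      (n + 1) * (γ + n) * hR α β γ l n := by
  unfold hR
  have h1 := poch_ne α hα (n + 1)
  have h2 := poch_ne β hβ (n + 1)
  have h3 := poch_ne γ hγ l
  have h4 : (Nat.factorial l : ℂ) ≠ 0 := by exact_mod_cast Nat.factorial_ne_zero l
  have h5 := add_nat_ne α hα (n + 1)
  have h6 := add_nat_ne β hβ (n + 1)
  rw [poch_succ α (n + 1), poch_succ β (n + 1), poch_succ γ n, Nat.factorial_succ]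
  field_simp
  push_cast
  ring

lemma hS_rec (k : ℝ) (hk0 : 0 < k) (α β γ δ w : ℂ)
    (hα : ∀ j : ℕ, α ≠ -(j : ℂ)) (hβ : ∀ j : ℕ, β ≠ -(j : ℂ))
    (hγ : ∀ j : ℕ, γ ≠ -(j : ℂ)) (n : ℕ) :
    (α + ((n + 1 : ℕ) : ℂ)) * (β + ((n + 1 : ℕ) : ℂ)) *
      (hS k α β γ δ w (n + 2) - (k : ℂ) ^ 2 * hS k α β γ δ w (n + 1)) =
    (n + 1) * (γ + n) * (hS k α β γ δ w (n + 1) - (k : ℂ) ^ 2 * hS k α β γ δ w n) -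
      (w - (1 - (k : ℂ) ^ 2) * δ * ((n + 1 : ℕ) : ℂ)) * hS k α β γ δ w (n + 1) := by
  rw [hS_succ k hk0 α β γ δ w (n + 1), Finset.sum_range_succ]
  have hs := hR_self α β γ hα hβ hγ (n + 1)
  have key : (α + ((n + 1 : ℕ) : ℂ)) * (β + ((n + 1 : ℕ) : ℂ)) *
      ∑ l ∈ Finset.range (n + 1), hR α β γ l (n + 1) * (w - (1 - (k : ℂ) ^ 2) * δ * (l : ℂ)) *
        hS k α β γ δ w l = (n + 1) * (γ + n) *
      ∑ l ∈ Finset.range (n + 1), hR α β γ l n * (w - (1 - (k : ℂ) ^ 2) * δ * (l : ℂ)) *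
        hS k α β γ δ w l := by
    rw [Finset.mul_sum, Finset.mul_sum]
    refine Finset.sum_congr rfl fun l _ => ?_
    linear_combination ((w - (1 - (k : ℂ) ^ 2) * δ * (l : ℂ)) * hS k α β γ δ w l) *
      hR_succ α β γ hα hβ hγ l n
  have h2 := hS_succ k hk0 α β γ δ w n
  linear_combination -key - ((w - (1 - (k : ℂ) ^ 2) * δ * ((n + 1 : ℕ) : ℂ)) *
    hS k α β γ δ w (n + 1)) * hs - ((n : ℂ) + 1) * (γ + n) * h2

/-- The sequence `c_n` satisfies the three-term recurrence defining the local Heun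
solution `Hℓ(1/k², -w/k² + αβ; α, β, γ, δ; z)`, hence `Σ c_n zⁿ` is that solution. -/
theorem heun_coefficients_recurrence (k : ℝ) (hk0 : 0 < k) (hk1 : k < 1)
    (α β γ δ w : ℂ)
    (hα : ∀ j : ℕ, α ≠ -(j : ℂ)) (hβ : ∀ j : ℕ, β ≠ -(j : ℂ))
    (hγ : ∀ j : ℕ, γ ≠ -(j : ℂ)) :
    heunc k α β γ δ w 0 = 1 ∧
    γ * heunc k α β γ δ w 1 = (k : ℂ) ^ 2 * α * β - w ∧
    ∀ n : ℕ, 1 ≤ n →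
      ((n : ℂ) - 1 + α) * ((n : ℂ) - 1 + β) * heunc k α β γ δ w (n - 1) -
        ((n : ℂ) * (((n : ℂ) - 1 + γ) * (1 + 1 / (k : ℂ) ^ 2) + δ / (k : ℂ) ^ 2 +
              α + β - γ - δ + 1) - w / (k : ℂ) ^ 2 + α * β) * heunc k α β γ δ w n +
        ((n : ℂ) + 1) * ((n : ℂ) + γ) / (k : ℂ) ^ 2 * heunc k α β γ δ w (n + 1) = 0 := by
  have hk : (k : ℂ) ≠ 0 := by exact_mod_cast hk0.ne'
  have hc : ∀ n, heunc k α β γ δ w n =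
      poch α n * poch β n / ((Nat.factorial n : ℂ) * poch γ n) * hS k α β γ δ w n := fun n => rfl
  have hS0 : hS k α β γ δ w 0 = 1 := by
    simp [hS, heunf]
  refine ⟨?_, ?_, ?_⟩
  · rw [hc, hS0]
    simp [poch]
  · have h1 := hS_succ k hk0 α β γ δ w 0
    have hs := hR_self α β γ hα hβ hγ 0
    have hg0 := add_nat_ne γ hγ 0
    rw [hc, h1]
    simp [poch, hS0] at hs hg0 ⊢
    field_simp
    linear_combination -w * hs
  · intro n hn
    obtain ⟨n, rfl⟩ : ∃ r, n = r + 1 := ⟨n - 1, by omega⟩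
    rw [Nat.add_sub_cancel, hc, hc, hc]
    have hr := hS_rec k hk0 α β γ δ w hα hβ hγ n
    have h3 := poch_ne γ hγ n
    have h4 : (Nat.factorial n : ℂ) ≠ 0 := by exact_mod_cast Nat.factorial_ne_zero n
    have h5 := add_nat_ne γ hγ n
    have h6 := add_nat_ne γ hγ (n + 1)
    have h7 : (n : ℂ) + 1 ≠ 0 := by exact_mod_cast Nat.succ_ne_zero n
    have h8 : (n : ℂ) + 1 + 1 ≠ 0 := by exact_mod_cast Nat.succ_ne_zero (n + 1)
    rw [poch_succ α (n + 1), poch_succ β (n + 1), poch_succ γ (n + 1), poch_succ γ n,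
      poch_succ α n, poch_succ β n, Nat.factorial_succ (n + 1), Nat.factorial_succ n]
    push_cast at hr h6 ⊢
    have h9 : (n : ℂ) + 1 + γ ≠ 0 := by rwa [add_comm]
    generalize hS k α β γ δ w n = s0 at *
    generalize hS k α β γ δ w (n + 1) = s1 at *
    generalize hS k α β γ δ w (n + 1 + 1) = s2 at *
    generalize poch α n = pa at *
    generalize poch β n = pb at *
    generalize poch γ n = pc at *
    generalize (Nat.factorial n : ℂ) = ft at *
    have e : (pa * (α + n) * (α + (n + 1)) * (pb * (β + n) * (β + (n + 1)))) /
        (((n : ℂ) + 1 + 1) * (((n : ℂ) + 1) * ft) * (pc * (γ + n) * (γ + (n + 1)))) * s2 =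
        pa * (α + n) * (pb * (β + n)) / (((n : ℂ) + 1) * ft * (pc * (γ + n))) *
        ((α + (n + 1)) * (β + (n + 1)) * s2) / ((((n : ℂ) + 1 + 1)) * (γ + (n + 1))) := by
      field_simp
    have e0 : pa * pb / (ft * pc) * s0 * ((n + α) * (n + β)) =
        pa * (α + n) * (pb * (β + n)) / (((n : ℂ) + 1) * ft * (pc * (γ + n))) *
        ((n + 1) * (γ + n) * s0) := by
      field_simp
      ring
    rw [e]
    set Q := pa * (α + n) * (pb * (β + n)) / (((n : ℂ) + 1) * ft * (pc * (γ + n))) with hQ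
    have e2 : ((n : ℂ) + 1 + 1) * (n + 1 + γ) / (k : ℂ) ^ 2 *
        (Q * ((α + (n + 1)) * (β + (n + 1)) * s2) / ((((n : ℂ) + 1 + 1)) * (γ + (n + 1)))) =
        Q * ((α + (n + 1)) * (β + (n + 1)) * s2) / (k : ℂ) ^ 2 := by
      rw [add_comm γ]
      field_simp
    rw [e2]
    have e3 : ((n : ℂ) + 1 - 1 + α) * (n + 1 - 1 + β) * (pa * pb / (ft * pc) * s0) =
        Q * ((n + 1) * (γ + n) * s0) := by
      rw [← e0]; ring
    rw [e3]
    clear_value Q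
    field_simp
    linear_combination Q * hr
end
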